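/- For every integer k, multiplication by Δ(z) = q·Π_{m≥1}(1−q^m)^{24} defines a linear isomorphism from the space 𝓜_{k−12}(Γ(1)) of modular forms of weight k−12 for SL(2,ℤ) onto the space 𝓢_k(Γ(1)) of cusp forms of weight k for SL(2,ℤ). -/

import Mathlib

open UpperHalfPlane Complex Real

/-- The discriminant function `Δ(z) = q·Π_{m≥1} (1 - qᵐ)²⁴`, `q = e^{2πiz}`. -/
noncomputable def Delta (z : UpperHalfPlane) : ℂ :=
  Complex.exp (2 * π * Complex.I * (z : ℂ)) *
    ∏' m : ℕ, (1 - Complex.exp (2 * π * Complex.I * (z : ℂ)) ^ (m + 1)) ^ 24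

/-!
`Δ` is a cusp form of weight 12 which vanishes nowhere on the upper half-plane and decays exactly
like `q` at `i∞`, while every cusp form of level one is `O(q)` there. Hence the quotient of a cusp
form of weight `k` by `Δ` is again holomorphic and bounded at the cusp, and division by `Δ` is
inverse to multiplication by `Δ`. For the group `𝒮ℒ`, the range of `SL(2, ℤ) → GL(2, ℝ)`, this is
`CuspForm.discriminantEquiv`; the image of `Γ(1)` in `GL(2, ℝ)` is the same subgroup, but not
definitionally, so the isomorphism has to be transported along an equality of levels.
-/

open scoped MatrixGroups

theorem Delta_eq_discriminant : Delta = ModularForm.discriminant := by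
  ext z
  simp only [Delta, ModularForm.discriminant_eq_q_prod, ModularForm.eta_q,
    Function.Periodic.qParam, ofReal_one, div_one]

section Cast

variable {Γ Γ' : Subgroup (GL (Fin 2) ℝ)} [Γ.HasDetOne] [Γ'.HasDetOne] {a b : ℤ}

/-- `ModularForm.mcast` as a linear equivalence: the identification of spaces of modular forms
along propositional equalities of weights and of levels. As in `mcast`, the equality of levels is
oriented from the target to the source. -/
def modularFormCastEquiv (hab : a = b) (hΓ : Γ' = Γ) : ModularForm Γ a ≃ₗ[ℂ] ModularForm Γ' b where
  toFun f := f.mcast hab hΓ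
  map_add' _ _ := rfl
  map_smul' _ _ := rfl
  invFun f := f.mcast hab.symm hΓ.symm
  left_inv _ := rfl
  right_inv _ := rfl

/-- `CuspForm.mcast` as a linear equivalence: the identification of spaces of cusp forms along
propositional equalities of weights and of levels, oriented as in `modularFormCastEquiv`. -/
def cuspFormCastEquiv (hab : a = b) (hΓ : Γ' = Γ) : CuspForm Γ a ≃ₗ[ℂ] CuspForm Γ' b where
  toFun f := f.mcast hab hΓ
  map_add' _ _ := rfl
  map_smul' _ _ := rfl
  invFun f := f.mcast hab.symm hΓ.symm
  left_inv _ := rfl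
  right_inv _ := rfl

end Cast

/-- Multiplication by `Δ` is a linear isomorphism from the modular forms of weight `k - 12`
for `SL(2, ℤ)` onto the cusp forms of weight `k` for `SL(2, ℤ)`. -/
theorem mul_Delta_linearEquiv (k : ℤ) :
    ∃ L : ModularForm (CongruenceSubgroup.Gamma 1) (k - 12) ≃ₗ[ℂ]
        CuspForm (CongruenceSubgroup.Gamma 1) k,
      ∀ (f : ModularForm (CongruenceSubgroup.Gamma 1) (k - 12)) (z : UpperHalfPlane),
        (L f) z = Delta z * f z := by
  have level_eq := CongruenceSubgroup.Gamma_one_coe_eq_SL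
  let toSL := modularFormCastEquiv (rfl : k - 12 = k - 12) level_eq.symm
  let ofSL := cuspFormCastEquiv (rfl : k = k) level_eq
  refine ⟨toSL ≪≫ₗ CuspForm.discriminantEquiv.symm ≪≫ₗ ofSL, fun f z ↦ ?_⟩
  rw [Delta_eq_discriminant]
  exact CuspForm.ofMulDiscriminant_apply (toSL f) z
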